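/- Every real quadratic field K contains infinitely many distinct unit-generated orders; that is, the set of orders O of K that are generated as ℤ-modules by their unit groups O^× is infinite. -/

import Mathlib

noncomputable section

/-- `x` is a unit of the subring `O` of `ℝ`. -/
def IsUnitOf (O : Subring ℝ) (x : ℝ) : Prop := x ∈ O ∧ ∃ y ∈ O, x * y = 1

/-- `O` is an order of the subfield `K` of `ℝ`: a subring of the ring of integers of `K`
that is a free `ℤ`-module of rank 2 with fraction field `K`. -/
def IsOrderOf (K : Subfield ℝ) (O : Subring ℝ) : Prop :=
  (O : Set ℝ) ⊆ K ∧ (∀ x ∈ O, IsIntegral ℤ x) ∧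
    Module.Free ℤ O ∧ Module.finrank ℤ O = 2 ∧
    ∀ x ∈ K, ∃ p ∈ O, ∃ q ∈ O, q ≠ 0 ∧ x = p / q

/-- A subring `O` of `ℝ` is unit-generated if it is generated, as a `ℤ`-module
(equivalently, as an additive group), by its set of units. -/
def IsUnitGenerated (O : Subring ℝ) : Prop :=
  AddSubgroup.closure {x : ℝ | IsUnitOf O x} = O.toAddSubgroup

/-- `K` is a real quadratic field: `K = ℚ(√D)` for a positive nonsquare integer `D`. -/
def IsRealQuadratic (K : Subfield ℝ) : Prop :=
  ∃ D : ℤ, 0 < D ∧ ¬ IsSquare D ∧ K = Subfield.closure {Real.sqrt D}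

/-- The ring of integers (maximal order) of a subfield `K` of `ℝ`: the elements of `K`
that are integral over `ℤ`. -/
def ringOfIntegers (K : Subfield ℝ) : Subring ℝ :=
  (integralClosure ℤ ℝ).toSubring ⊓ K.toSubring

/-!
A unit `ε = x + y√D` of `ℤ[√D]` has norm `±1`, so `ε⁻¹ = ±(2x - ε)` lies in `ℤ[ε]`. Hence the
powers of `ε`, which span `ℤ[ε]` additively, are units of `ℤ[ε]`; and if `y ≠ 0`, then `ℤ[ε]` is an
order of `ℚ(√D)`. Every element of `ℤ[ε]` has its coefficient of `√D` divisible by `y`, so `ℤ[ε]`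
determines `|y|`, and Pell's equation `x² - D y² = 1` has solutions with infinitely many values
of `y`.
-/

section MinimalPolynomial

open Polynomial

variable {R S : Type*} [CommRing R] [CommRing S] [Algebra R S] {x : S} {b c : R}

theorem isIntegral_of_quadratic_eq_zero
    (hx : x ^ 2 + algebraMap R S b * x + algebraMap R S c = 0) : IsIntegral R x :=
  ⟨X ^ 2 + C b * X + C c, by monicity!, by simpa [eval₂_eq_eval_map] using hx⟩

theorem natDegree_minpoly_eq_two [IsDomain R] [IsIntegrallyClosed R] [IsDomain S]
    [Module.IsTorsionFree R S] (hxR : x ∉ (algebraMap R S).range)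
    (hx : x ^ 2 + algebraMap R S b * x + algebraMap R S c = 0) :
    (minpoly R x).natDegree = 2 := by
  have hint : IsIntegral R x := isIntegral_of_quadratic_eq_zero hx
  have hdeg : (C 1 * X ^ 2 + C b * X + C c : R[X]).natDegree = 2 :=
    natDegree_quadratic one_ne_zero
  refine le_antisymm ?_ ((minpoly.two_le_natDegree_iff hint).2 hxR)
  rw [← hdeg]
  exact natDegree_le_of_dvd (minpoly.isIntegrallyClosed_dvd hint (by simpa using hx))
    (ne_zero_of_natDegree_gt (hdeg ▸ two_pos))

end MinimalPolynomial

theorem isOrderOf_closure_singleton {α : ℝ} (hα : IsIntegral ℤ α)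
    (hdeg : (minpoly ℤ α).natDegree = 2) :
    IsOrderOf (Subfield.closure {α}) (Subring.closure {α}) := by
  have hfree : Module.Free ℤ (Algebra.adjoin ℤ {α}) :=
    .of_basis (Algebra.adjoin.powerBasis' hα).basis
  have hrank : Module.finrank ℤ (Algebra.adjoin ℤ {α}) = 2 :=
    (Algebra.adjoin.powerBasis' hα).finrank.trans hdeg
  have hint : Algebra.adjoin ℤ {α} ≤ integralClosure ℤ ℝ := adjoin_le_integralClosure hα
  rw [Algebra.adjoin_int] at hfree hrank hint
  refine ⟨Subfield.subring_closure_le _, fun x hx => hint hx, hfree, hrank, fun x hx => ?_⟩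
  obtain ⟨p, hp, q, hq, rfl⟩ := Subfield.mem_closure_iff.1 hx
  obtain rfl | hq0 := eq_or_ne q 0
  · exact ⟨0, zero_mem _, 1, one_mem _, one_ne_zero, by simp⟩
  · exact ⟨p, hp, q, hq, hq0, rfl⟩

theorem isUnitOf_one (O : Subring ℝ) : IsUnitOf O 1 :=
  ⟨one_mem O, 1, one_mem O, one_mul 1⟩

theorem IsUnitOf.mul {O : Subring ℝ} {x y : ℝ} (hx : IsUnitOf O x) (hy : IsUnitOf O y) :
    IsUnitOf O (x * y) := by
  obtain ⟨hxO, x', hx'O, hxx'⟩ := hx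
  obtain ⟨hyO, y', hy'O, hyy'⟩ := hy
  exact ⟨mul_mem hxO hyO, x' * y', mul_mem hx'O hy'O,
    by rw [mul_mul_mul_comm, hxx', hyy', one_mul]⟩

theorem isUnitGenerated_closure {S : Set ℝ} (hS : ∀ x ∈ S, IsUnitOf (Subring.closure S) x) :
    IsUnitGenerated (Subring.closure S) := by
  have hmonoid : ∀ x ∈ Submonoid.closure S, IsUnitOf (Subring.closure S) x := fun x hx =>
    Submonoid.closure_induction hS (isUnitOf_one _) (fun _ _ _ _ => IsUnitOf.mul) hx
  refine le_antisymm ((AddSubgroup.closure_le _).2 fun x hx => hx.1) fun x hx => ?_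
  exact AddSubgroup.closure_mono hmonoid (Subring.mem_closure_iff.1 hx)

theorem subfield_closure_intCast_add_intCast_mul {F : Type*} [DivisionRing F] {a b : ℤ}
    (hb : (b : F) ≠ 0) (x : F) :
    Subfield.closure {a + b * x} = Subfield.closure {x} := by
  apply le_antisymm <;> rw [Subfield.closure_le, Set.singleton_subset_iff]
  · have hx : x ∈ Subfield.closure {x} := Subfield.subset_closure rfl
    exact add_mem (intCast_mem _ a) (mul_mem (intCast_mem _ b) hx)
  · have hy : a + b * x ∈ Subfield.closure {a + b * x} := Subfield.subset_closure rfl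
    have hx : (b : F)⁻¹ * (a + b * x - a) ∈ Subfield.closure {a + b * x} :=
      mul_mem (inv_mem (intCast_mem _ b)) (sub_mem hy (intCast_mem _ a))
    rwa [add_sub_cancel_left, inv_mul_cancel_left₀ hb] at hx

section QuadraticIntegers

variable {d : ℤ}

theorem im_dvd_im_of_mem_closure {z w : ℤ√d} (hw : w ∈ Subring.closure {z}) : z.im ∣ w.im := by
  induction hw using Subring.closure_induction with
  | mem w hw => rw [hw]
  | zero | one => simp
  | add v w _ _ hv hw => exact dvd_add hv hw
  | neg w _ hw => exact dvd_neg.2 hw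
  | mul v w _ _ hv hw =>
    rw [Zsqrtd.im_mul]
    exact dvd_add (hw.mul_left _) (hv.mul_right _)

theorem star_eq_trace_sub (z : ℤ√d) : star z = (2 * z.re : ℤ) - z :=
  Zsqrtd.ext (by simp [two_mul]) (by simp)

theorem star_mem_closure (z : ℤ√d) : star z ∈ Subring.closure {z} := by
  rw [star_eq_trace_sub]
  exact sub_mem (intCast_mem _ _) (Subring.subset_closure rfl)

theorem sq_sub_trace_mul_add_norm_eq_zero (z : ℤ√d) :
    z ^ 2 + (-(2 * z.re) : ℤ) * z + (z.norm : ℤ) = 0 := by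
  rw [Zsqrtd.norm_eq_mul_conj, star_eq_trace_sub]
  push_cast
  ring

theorem exists_mem_closure_mul_eq_one {z : ℤ√d} (hz : IsUnit z) :
    ∃ w ∈ Subring.closure {z}, z * w = 1 := by
  have hnorm : z.norm * z.norm = 1 :=
    Int.isUnit_mul_self ((Zsqrtd.isUnit_iff_norm_isUnit z).1 hz)
  refine ⟨z.norm * star z, mul_mem (intCast_mem _ _) (star_mem_closure z), ?_⟩
  rw [mul_left_comm, ← Zsqrtd.norm_eq_mul_conj, ← Int.cast_mul, hnorm, Int.cast_one]

variable (hd : 0 ≤ d)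

theorem closure_toReal (z : ℤ√d) :
    Subring.closure {Zsqrtd.toReal hd z} = (Subring.closure {z}).map (Zsqrtd.toReal hd) := by
  rw [RingHom.map_closure, Set.image_singleton]

theorem isUnitGenerated_closure_toReal {z : ℤ√d} (hz : IsUnit z) :
    IsUnitGenerated (Subring.closure {Zsqrtd.toReal hd z}) := by
  obtain ⟨w, hw, hzw⟩ := exists_mem_closure_mul_eq_one hz
  refine isUnitGenerated_closure fun x hx => ?_
  obtain rfl : x = Zsqrtd.toReal hd z := hx
  refine ⟨Subring.subset_closure rfl, Zsqrtd.toReal hd w, ?_, by rw [← map_mul, hzw, map_one]⟩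
  rw [closure_toReal]
  exact ⟨w, hw, rfl⟩

theorem toReal_injective_of_not_isSquare (hsq : ¬ IsSquare d) :
    Function.Injective (Zsqrtd.toReal hd) :=
  Zsqrtd.toReal_injective hd fun n hn => hsq ⟨n, hn⟩

theorem isOrderOf_closure_toReal (hsq : ¬ IsSquare d) {z : ℤ√d} (hz : z.im ≠ 0) :
    IsOrderOf (Subfield.closure {√(d : ℝ)}) (Subring.closure {Zsqrtd.toReal hd z}) := by
  have hroot := congrArg (Zsqrtd.toReal hd) (sq_sub_trace_mul_add_norm_eq_zero z)
  simp only [map_add, map_mul, map_pow, map_intCast, map_zero] at hroot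
  have hnotint : Zsqrtd.toReal hd z ∉ (algebraMap ℤ ℝ).range := by
    rintro ⟨m, hm⟩
    have hmz : (m : ℤ√d) = z := toReal_injective_of_not_isSquare hd hsq (by simpa using hm)
    exact hz (by simp [← hmz])
  rw [← subfield_closure_intCast_add_intCast_mul (a := z.re) (Int.cast_ne_zero.2 hz)]
  exact isOrderOf_closure_singleton (isIntegral_of_quadratic_eq_zero hroot)
    (natDegree_minpoly_eq_two hnotint hroot)

theorem im_dvd_im_of_toReal_mem_closure (hsq : ¬ IsSquare d) {z w : ℤ√d}
    (hw : Zsqrtd.toReal hd w ∈ Subring.closure {Zsqrtd.toReal hd z}) : z.im ∣ w.im := by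
  rw [closure_toReal] at hw
  obtain ⟨v, hv, hvw⟩ := hw
  obtain rfl : v = w := toReal_injective_of_not_isSquare hd hsq hvw
  exact im_dvd_im_of_mem_closure hv

theorem natAbs_im_eq_of_closure_toReal_eq (hsq : ¬ IsSquare d) {z w : ℤ√d}
    (h : Subring.closure {Zsqrtd.toReal hd z} = Subring.closure {Zsqrtd.toReal hd w}) :
    z.im.natAbs = w.im.natAbs :=
  Int.natAbs_eq_of_dvd_dvd
    (im_dvd_im_of_toReal_mem_closure hd hsq (h ▸ Subring.subset_closure rfl))
    (im_dvd_im_of_toReal_mem_closure hd hsq (h ▸ Subring.subset_closure rfl))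

end QuadraticIntegers

/-- Every real quadratic field contains infinitely many distinct unit-generated orders. -/
theorem infinite_unitGenerated_orders (K : Subfield ℝ) (hK : IsRealQuadratic K) :
    {O : Subring ℝ | IsOrderOf K O ∧ IsUnitGenerated O}.Infinite := by
  obtain ⟨D, hD, hsq, rfl⟩ := hK
  obtain ⟨u, hu⟩ := Pell.IsFundamental.exists_of_not_isSquare hD hsq
  have hpos (k : ℕ) : 0 < (u ^ (k + 1)).y := Pell.Solution₁.y_pow_succ_pos hu.x_pos hu.2.1 k
  refine Set.infinite_of_injective_forall_mem
    (f := fun k : ℕ => Subring.closure {Zsqrtd.toReal hD.le (u ^ (k + 1) : Pell.Solution₁ D)})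
    (fun k l hkl => ?_) fun k => ⟨isOrderOf_closure_toReal hD.le hsq (hpos k).ne',
      isUnitGenerated_closure_toReal hD.le Unitary.isUnit_coe⟩
  have habs : (u ^ (k + 1)).y.natAbs = (u ^ (l + 1)).y.natAbs :=
    natAbs_im_eq_of_closure_toReal_eq hD.le hsq hkl
  have hy : (u ^ (k + 1)).y = (u ^ (l + 1)).y :=
    (Int.natAbs_inj_of_nonneg_of_nonneg (hpos k).le (hpos l).le).1 habs
  have hexp : ((k + 1 : ℕ) : ℤ) = (l + 1 : ℕ) :=
    hu.y_strictMono.injective (by simpa only [zpow_natCast] using hy)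
  omega
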